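/- arXiv:1001.0879 — 4 statements merged into one kernel-verified Lean document; each statement's English description precedes it below -/
import Mathlib

section
/- Let Z be a nonempty set and K : Z × Z → ℝ a symmetric positive-semidefinite kernel with K(x, x) ≤ c² for all x ∈ Z, where c > 0. Fix an integer d ≥ 2, a real F > 0, and a positive integer T (known in advance). Then there exists an online prediction strategy (depending on T, F and c) with predictions in the probability simplex Δ ⊂ ℝ^d such that for all signals x_1, …, x_T ∈ Z, all outcomes y_1, …, y_T ∈ Δ, and all coefficient vectors c_1, …, c_{d−1} ∈ ℝ^T with Σ_{i=1}^{d−1} c_i' K̃ c_i ≤ F²: Σ_{t=1}^T λ(y_t, γ_t) ≤ Σ_{t=1}^T λ(y_t, ξ_t) + 2 c F √((d−1)T), where K̃ is the T×T Gram matrix K̃_{s,t} = K(x_s, x_t) and ξ_t ∈ ℝ^d is defined by ξ_t^i = 1/d + Σ_{s=1}^T c_{i,s} K(x_s, x_t) for i = 1, …, d−1 and ξ_t^d = 1 − Σ_{i=1}^{d−1} ξ_t^i. -/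
/-!
The strategy is functional gradient descent in the reproducing kernel space, followed by a
substitution step. Write `d = n + 1`, let `aff` parametrise the hyperplane of vectors of total mass
one by the first `n` coordinates, and let `red` be the transpose of its linear part. The current
hypothesis `h` gives the improper prediction `f = aff (h x)`; after seeing `y` it moves by
`-(1 / a) * red (f - y)` times the kernel section at `x`. With `κ = K x x / a` and `Φ` equal to `a`
times the squared distance from `h` to a competitor predicting `ξ`, one step changes `Φ` by
`-2 ⟨red (f - y), u - v⟩ + κ ‖red (f - y)‖²`, where `f = aff u` and `ξ = aff v`, so by convexity
(`brier_aff_sub_le`)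

  `λ(y, f) - κ ‖red (f - y)‖² - λ(y, ξ) ≤ Φ_t - Φ_{t+1}`.

The lemma `exists_substitution` replaces `f` by some `γ` in the simplex with
`λ(y, γ) ≤ λ(y, f) - κ ‖red (f - y)‖² + κ n` for all outcomes `y`. It is a minimax statement: `γ` is
the minimiser of a strictly convex quadratic on the simplex, and its value is controlled because
the variance of `red (Pi.single i 1)`, with `i` drawn from `γ`, is at most `n` (`variance_le`), while
`κ ‖red e‖² ≤ ‖e‖²` for `e` of total mass zero as soon as `κ (n + 2) ≤ 1`. Telescoping gives
regret at most `a F² + n T c² / a`, which is `2 c F √(n T)` for `a = c √(n T) / F`.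

If `c² / a` is too large for the substitution step, then the bound is at least `T n / (n + 1)`, which
the uniform prediction never exceeds.

Only the finitely many kernel sections at the observed signals matter, so the distance in the
reproducing kernel space is expressed through the Gram matrix of these signals.
-/

open Finset Matrix

noncomputable section

/-- Brier loss: squared Euclidean distance between prediction and outcome. -/
def brier {d : ℕ} (y γ : Fin d → ℝ) : ℝ := ∑ i, (γ i - y i) ^ 2

/-- The probability simplex in ℝ^d. -/
def probSimplex (d : ℕ) : Set (Fin d → ℝ) :=
  {y | (∀ i, 0 ≤ y i) ∧ ∑ i, y i = 1}

/-- Kernel expert: ξ^i = 1/d + Σ_s c_{i,s} K(x_s, z) for i < d-1, and the last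
component is one minus the sum of the others. -/
def kerExpert {Z : Type*} (K : Z → Z → ℝ) (d T : ℕ) (xs : Fin T → Z)
    (c : Fin (d - 1) → Fin T → ℝ) (z : Z) : Fin d → ℝ :=
  fun i =>
    if h : (i : ℕ) < d - 1 then (1 : ℝ) / d + ∑ s, c ⟨i, h⟩ s * K (xs s) z
    else 1 - ∑ k : Fin (d - 1), ((1 : ℝ) / d + ∑ s, c k s * K (xs s) z)

/-- The affine parametrisation of the hyperplane `∑ i, ξ i = 1` of `ℝ^(n+1)` by its first `n`
coordinates, centred at the uniform distribution; kernel experts are its values. -/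
def aff {n : ℕ} (u : Fin n → ℝ) : Fin (n + 1) → ℝ :=
  fun i =>
    if h : (i : ℕ) < n then (1 : ℝ) / (n + 1 : ℕ) + u ⟨i, h⟩
    else 1 - ∑ k : Fin n, ((1 : ℝ) / (n + 1 : ℕ) + u k)

lemma aff_castSucc {n : ℕ} (u : Fin n → ℝ) (i : Fin n) :
    aff u i.castSucc = (1 : ℝ) / (n + 1 : ℕ) + u i := by
  simp [aff]

lemma aff_last {n : ℕ} (u : Fin n → ℝ) :
    aff u (Fin.last n) = 1 - ∑ k : Fin n, ((1 : ℝ) / (n + 1 : ℕ) + u k) := by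
  simp [aff]

lemma sum_aff {n : ℕ} (u : Fin n → ℝ) : ∑ i, aff u i = 1 := by
  rw [Fin.sum_univ_castSucc, aff_last]
  simp only [aff_castSucc]
  ring

/-- The transpose of the linear part of `aff`: it turns the half-gradient `ξ - y` of the Brier loss
in `ξ` into the half-gradient in the parameter `u`. -/
def red {n : ℕ} (e : Fin (n + 1) → ℝ) : Fin n → ℝ :=
  fun i => e i.castSucc - e (Fin.last n)

/-- First-order (convexity) bound for the Brier loss in the parameter `u`. -/
lemma brier_aff_sub_le {n : ℕ} (u v : Fin n → ℝ) (y : Fin (n + 1) → ℝ) :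
    brier y (aff u) - brier y (aff v) ≤ 2 * ∑ i, red (aff u - y) i * (u i - v i) := by
  have key : 2 * ∑ i, red (aff u - y) i * (u i - v i)
      = ∑ j, 2 * (aff u j - y j) * (aff u j - aff v j) := by
    have hl : aff u (Fin.last n) - aff v (Fin.last n) = - ∑ i, (u i - v i) := by
      simp only [aff_last, sum_add_distrib, sum_sub_distrib]
      ring
    rw [Fin.sum_univ_castSucc, hl, mul_sum, ← sum_neg_distrib, mul_sum, ← sum_add_distrib]
    refine sum_congr rfl fun i _ => ?_
    have : aff u i.castSucc - aff v i.castSucc = u i - v i := by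
      simp [aff_castSucc]
    rw [this]
    simp only [red, Pi.sub_apply]
    ring
  rw [key, brier, brier, ← sum_sub_distrib]
  refine sum_le_sum fun j _ => ?_
  nlinarith [sq_nonneg (aff u j - aff v j)]

/-- Variational inequality for the minimiser of `‖p‖² + ⟨l, p⟩` over the simplex. -/
lemma exists_min_simplex {d : ℕ} (hd : 0 < d) (l : Fin d → ℝ) :
    ∃ γ ∈ probSimplex d, ∀ y ∈ probSimplex d,
      0 ≤ ∑ i, (2 * γ i + l i) * (y i - γ i) := by
  have hne : (probSimplex d).Nonempty :=
    ⟨Pi.single ⟨0, hd⟩ 1, single_mem_stdSimplex ℝ (⟨0, hd⟩ : Fin d)⟩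
  have hcomp : IsCompact (probSimplex d) := isCompact_stdSimplex ℝ (Fin d)
  have hconv : Convex ℝ (probSimplex d) := convex_stdSimplex ℝ (Fin d)
  obtain ⟨γ, hγ, hmin⟩ := hcomp.exists_isMinOn hne
    (f := fun p : Fin d → ℝ => ∑ i, (p i ^ 2 + l i * p i)) (by fun_prop)
  refine ⟨γ, hγ, fun y hy => ?_⟩
  set X := ∑ i, (2 * γ i + l i) * (y i - γ i) with hX
  set W := ∑ i, (y i - γ i) ^ 2 with hW
  have hWn : 0 ≤ W := sum_nonneg fun i _ => sq_nonneg _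
  have hs : ∀ s : ℝ, 0 < s → s ≤ 1 → 0 ≤ s * X + s ^ 2 * W := by
    intro s hs0 hs1
    have hmem : (1 - s) • γ + s • y ∈ probSimplex d :=
      hconv hγ hy (by linarith) hs0.le (by ring)
    have h := isMinOn_iff.1 hmin _ hmem
    have e : s * X + s ^ 2 * W
        = ∑ i, ((((1 - s) • γ + s • y) i) ^ 2 + l i * ((1 - s) • γ + s • y) i)
          - ∑ i, (γ i ^ 2 + l i * γ i) := by
      rw [hX, hW, mul_sum, mul_sum, ← sum_add_distrib, ← sum_sub_distrib]
      refine sum_congr rfl fun i _ => ?_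
      simp only [Pi.add_apply, Pi.smul_apply, smul_eq_mul]
      ring
    rw [e]
    linarith
  by_contra! hneg
  -- the step `s = -X / (W - X)` lies in `(0, 1]` and makes `X + s W` negative
  have hpos : 0 < W - X := by linarith
  have h := hs (-X / (W - X)) (div_pos (by linarith) hpos) ((div_le_one hpos).2 (by linarith))
  have e : -X / (W - X) * X + (-X / (W - X)) ^ 2 * W = X ^ 3 / (W - X) ^ 2 := by
    field_simp
    ring
  have h3 : X ^ 3 / (W - X) ^ 2 < 0 :=
    div_neg_of_neg_of_pos (Odd.pow_neg (by decide) hneg) (by positivity)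
  rw [e] at h
  linarith

lemma sum_red_sq {n : ℕ} (e : Fin (n + 1) → ℝ) :
    ∑ i, red e i ^ 2
      = ∑ j, e j ^ 2 - 2 * e (Fin.last n) * ∑ j, e j + (n + 1) * e (Fin.last n) ^ 2 := by
  have : ∀ i, red e i ^ 2 = e i.castSucc ^ 2 - 2 * e (Fin.last n) * e i.castSucc
      + e (Fin.last n) ^ 2 := fun i => by simp only [red]; ring
  rw [Fin.sum_univ_castSucc, Fin.sum_univ_castSucc]
  simp only [this, sum_add_distrib, sum_sub_distrib, ← mul_sum, sum_const,
    card_univ, Fintype.card_fin, nsmul_eq_mul]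
  ring

/-- The left-hand side is the variance of `red (Pi.single i 1)` when the index `i` is drawn
from `p`. -/
lemma variance_le {n : ℕ} (hn : 1 ≤ n) {p : Fin (n + 1) → ℝ} (hp : p ∈ probSimplex (n + 1)) :
    1 + (n + 1) * (p (Fin.last n) * (1 - p (Fin.last n))) - ∑ i, p i ^ 2 ≤ n := by
  obtain ⟨-, h1⟩ := hp
  rcases hn.eq_or_lt with rfl | h2
  · have h1' : p 0 + p 1 = 1 := (Fin.sum_univ_two p).symm.trans h1
    have hs : ∑ i, p i ^ 2 = p 0 ^ 2 + p 1 ^ 2 := Fin.sum_univ_two (fun i => p i ^ 2)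
    have e : Fin.last 1 = 1 := rfl
    have h0 : p 0 = 1 - p 1 := by linarith
    rw [hs, e, h0]
    push_cast
    nlinarith [sq_nonneg (2 * p 1 - 1)]
  · have h2' : (2 : ℝ) ≤ n := by exact_mod_cast h2
    have hq : p (Fin.last n) * (1 - p (Fin.last n)) ≤ 1 / 4 := by
      nlinarith [sq_nonneg (2 * p (Fin.last n) - 1)]
    have hs : 0 ≤ ∑ i, p i ^ 2 := sum_nonneg fun i _ => sq_nonneg _
    nlinarith

lemma simplex_le_one {d : ℕ} {p : Fin d → ℝ} (hp : p ∈ probSimplex d) (i : Fin d) : p i ≤ 1 :=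
  hp.2 ▸ single_le_sum (f := p) (fun j _ => hp.1 j) (mem_univ i)

lemma simplex_sq_le_one {d : ℕ} {p : Fin d → ℝ} (hp : p ∈ probSimplex d) :
    ∑ i, p i ^ 2 ≤ 1 := by
  rw [← hp.2]
  exact sum_le_sum fun i _ => by nlinarith [hp.1 i, simplex_le_one hp i]

/-- Substitution step: a possibly improper prediction `f` of total mass one is replaced by a
prediction in the simplex which is better for every outcome, up to `κ n`, even after the second
order term `κ ‖red (f - y)‖²` of the gradient step has been subtracted. -/
lemma exists_substitution {n : ℕ} (hn : 1 ≤ n) (f : Fin (n + 1) → ℝ) (hf : ∑ i, f i = 1)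
    (κ : ℝ) (hκ : 0 ≤ κ) (hκn : κ * (n + 2) ≤ 1) :
    ∃ γ ∈ probSimplex (n + 1), ∀ y ∈ probSimplex (n + 1),
      brier y γ ≤ brier y f - κ * ∑ i, red (f - y) i ^ 2 + κ * n := by
  set L := Fin.last n with hL
  -- Averaged over `i ∼ p`, the right-hand side at `y = e_i` is `⟨l, p⟩` plus a constant,
  -- so the minimax-optimal prediction minimises `‖p‖² + ⟨l, p⟩`. Here `e_i` is the `i`-th vertex,
  -- and only the differences between the coordinates of `l` matter.
  set l : Fin (n + 1) → ℝ := fun i => -2 * f i + 2 * κ * f i - (if i = L then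
    2 * κ * (1 - (n + 1) * f L) + κ * (n - 1) else 0) - 2 * κ * f L with hl
  obtain ⟨γ, hγ, hv⟩ := exists_min_simplex n.succ_pos l
  refine ⟨γ, hγ, fun y hy => ?_⟩
  have h := hv y hy
  have hlsum : ∑ i, (2 * γ i + l i) * (y i - γ i)
      = ∑ i, (2 * γ i * y i - 2 * γ i ^ 2) + (2 * κ - 2) * ∑ i, (f i * y i - f i * γ i)
        - (2 * κ * (1 - (n + 1) * f L) + κ * (n - 1)) * (y L - γ L) := by
    have e : ∀ i, (2 * γ i + l i) * (y i - γ i)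
        = (2 * γ i * y i - 2 * γ i ^ 2) + (2 * κ - 2) * (f i * y i - f i * γ i)
          - (if i = L then (2 * κ * (1 - (n + 1) * f L) + κ * (n - 1)) * (y L - γ L) else 0)
          - 2 * κ * f L * (y i - γ i) := by
      intro i
      by_cases hi : i = L
      · subst hi; simp only [hl, if_true]; ring
      · simp only [hl, if_neg hi]; ring
    simp only [e, sum_add_distrib, sum_sub_distrib, ← mul_sum, hy.2, hγ.2]
    simp
  rw [hlsum] at h
  have hvarγ := mul_nonneg hκ (sub_nonneg.2 (variance_le hn hγ))
  have hvary : 0 ≤ κ * (1 + (n + 1) * (y L * (1 - y L)) - ∑ i, y i ^ 2) := by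
    have h1 := simplex_sq_le_one hy
    have h2 : 0 ≤ (n + 1 : ℝ) * (y L * (1 - y L)) :=
      mul_nonneg (by positivity) (mul_nonneg (hy.1 L) (by linarith [simplex_le_one hy L]))
    exact mul_nonneg hκ (by linarith)
  have hfγ : κ * ∑ i, red (f - γ) i ^ 2 ≤ ∑ i, (f - γ) i ^ 2 := by
    have h0 : ∑ i, (f - γ) i = 0 := by simp [hf, hγ.2]
    have h1 : (f - γ) L ^ 2 ≤ ∑ i, (f - γ) i ^ 2 :=
      single_le_sum (f := fun i => (f - γ) i ^ 2) (fun j _ => sq_nonneg _) (mem_univ L)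
    have h2 : 0 ≤ ∑ i, (f - γ) i ^ 2 := sum_nonneg fun i _ => sq_nonneg _
    rw [sum_red_sq, h0]
    have h3 : ∑ i, (f - γ) i ^ 2 - 2 * (f - γ) (Fin.last n) * 0 + (n + 1) * (f - γ) (Fin.last n) ^ 2
        ≤ (n + 2) * ∑ i, (f - γ) i ^ 2 := by
      have : (0 : ℝ) ≤ n + 1 := by positivity
      nlinarith [mul_le_mul_of_nonneg_left h1 this]
    nlinarith [mul_le_mul_of_nonneg_left h3 hκ, mul_le_mul_of_nonneg_right hκn h2]
  have hsub : ∀ p ∈ probSimplex (n + 1), ∑ i, (f - p) i ^ 2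
      = ∑ i, f i ^ 2 - 2 * ∑ i, f i * p i + ∑ i, p i ^ 2 := by
    intro p _
    rw [mul_sum, ← sum_sub_distrib, ← sum_add_distrib]
    exact sum_congr rfl fun i _ => by simp only [Pi.sub_apply]; ring
  have h0 : ∀ p ∈ probSimplex (n + 1), ∑ i, (f - p) i = 0 := by
    intro p hp; simp [hf, hp.2]
  have hb : brier y f = ∑ i, (f - y) i ^ 2 := rfl
  have hbγ : brier y γ = ∑ i, γ i ^ 2 - 2 * ∑ i, γ i * y i + ∑ i, y i ^ 2 := by
    rw [brier, mul_sum, ← sum_sub_distrib, ← sum_add_distrib]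
    exact sum_congr rfl fun i _ => by ring
  rw [sum_red_sq, h0 γ hγ, hsub γ hγ] at hfγ
  rw [hb, hbγ, sum_red_sq, h0 y hy, hsub y hy]
  simp only [sum_sub_distrib, ← mul_sum, mul_assoc, Pi.sub_apply, ← hL] at h hfγ hvarγ ⊢
  nlinarith

/-- The functional gradient step: the current hypothesis `h` is an element of the product of `n`
copies of the reproducing kernel space of `K`, viewed as a function, and `1 / a` is the learning
rate. -/
def gradStep {Z : Type*} (K : Z → Z → ℝ) (a : ℝ) {n : ℕ} (h : Z → Fin n → ℝ)
    (p : Z × (Fin (n + 1) → ℝ)) : Z → Fin n → ℝ :=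
  fun z i => h z i - 1 / a * red (aff (h p.1) - p.2) i * K p.1 z

/-- Expansion of the Gram quadratic form under a change of one coefficient. -/
lemma gram_sub_single {m : ℕ} (G : Matrix (Fin m) (Fin m) ℝ) (hG : ∀ s t, G s t = G t s)
    (v : Fin m → ℝ) (t : Fin m) (b : ℝ) :
    (v - Pi.single t b) ⬝ᵥ (G *ᵥ (v - Pi.single t b))
      = v ⬝ᵥ (G *ᵥ v) - 2 * b * ∑ s, v s * G s t + b ^ 2 * G t t := by
  have e1 : v ⬝ᵥ (G *ᵥ Pi.single t b) = b * ∑ s, v s * G s t := by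
    simp only [dotProduct, mulVec_single, mul_sum]
    exact sum_congr rfl fun s _ => by simp; ring
  have e2 : (Pi.single t b : Fin m → ℝ) ⬝ᵥ (G *ᵥ v) = b * ∑ s, v s * G s t := by
    rw [single_dotProduct, mulVec, dotProduct]
    congr 1
    exact sum_congr rfl fun s _ => by rw [hG t s, mul_comm]
  have e3 : (Pi.single t b : Fin m → ℝ) ⬝ᵥ (G *ᵥ Pi.single t b) = b ^ 2 * G t t := by
    rw [single_dotProduct, mulVec_single]
    simp
    ring
  rw [mulVec_sub, sub_dotProduct, dotProduct_sub, dotProduct_sub, e1, e2, e3]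
  ring

/-- Horizon-dependent bound for mKAAR: knowing T and F in advance, the regret against
every set of kernel experts with Σ_i c_i'K̃c_i ≤ F² is at most 2cF√((d-1)T). -/
theorem mKAAR_sqrt_bound (Z : Type*) [Nonempty Z] (K : Z → Z → ℝ)
    (hsymm : ∀ z z', K z z' = K z' z)
    (hpsd : ∀ (m : ℕ) (x : Fin m → Z) (ξ : Fin m → ℝ),
      0 ≤ ∑ s, ∑ t, K (x s) (x t) * ξ s * ξ t)
    (c : ℝ) (hc : 0 < c) (hKbound : ∀ z, K z z ≤ c ^ 2)
    (d : ℕ) (hd : 2 ≤ d) (F : ℝ) (hF : 0 < F) (T : ℕ) (hT : 1 ≤ T) :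
    ∃ S : List (Z × (Fin d → ℝ)) → Z → (Fin d → ℝ),
      (∀ hist z, S hist z ∈ probSimplex d) ∧
      ∀ (x : ℕ → Z) (y : ℕ → Fin d → ℝ),
        (∀ t < T, y t ∈ probSimplex d) →
        ∀ cf : Fin (d - 1) → Fin T → ℝ,
          (∑ i : Fin (d - 1),
              cf i ⬝ᵥ ((Matrix.of fun s t : Fin T => K (x s) (x t)) *ᵥ cf i)) ≤ F ^ 2 →
          ∑ t : Fin T,
              brier (y t) (S (List.ofFn fun s : Fin (t : ℕ) => (x s, y s)) (x t))
            ≤ ∑ t : Fin T,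
                brier (y t) (kerExpert K d T (fun s => x s) cf (x t))
              + 2 * c * F * Real.sqrt (((d : ℝ) - 1) * (T : ℝ)) := by
  obtain ⟨n, rfl⟩ : ∃ n, d = n + 1 := ⟨d - 1, by omega⟩
  have hn : 1 ≤ n := by omega
  have hn0 : (0 : ℝ) < n := by exact_mod_cast hn
  have hT0 : (0 : ℝ) < T := by exact_mod_cast hT
  set R := Real.sqrt (n * T) with hR
  have hRpos : 0 < R := Real.sqrt_pos.2 (by positivity)
  have hR2 : R ^ 2 = n * T := Real.sq_sqrt (by positivity)
  have hd1 : Real.sqrt ((((n + 1 : ℕ) : ℝ) - 1) * (T : ℝ)) = R := by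
    rw [hR]; congr 1; push_cast; ring
  rw [hd1]
  have hK0 : ∀ z, 0 ≤ K z z := fun z => by simpa using hpsd 1 (fun _ => z) (fun _ => 1)
  -- The inverse learning rate `a` balances `a F²` against `n T c² / a`.
  set a := c * R / F with ha
  have ha0 : 0 < a := by positivity
  have haF : a * F ^ 2 = c * F * R := by rw [ha]; field_simp
  have haT : c ^ 2 / a * n * T = c * F * R := by
    rw [mul_assoc, ← hR2, ha]; field_simp
  by_cases hsmall : 2 * (c ^ 2 / a) * (n + 1) ≤ 1
  · have hex : ∀ (h : Z → Fin n → ℝ) (z : Z), ∃ γ ∈ probSimplex (n + 1),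
        ∀ y ∈ probSimplex (n + 1), brier y γ ≤ brier y (aff (h z))
          - K z z / a * ∑ i, red (aff (h z) - y) i ^ 2 + K z z / a * n := by
      intro h z
      have h1 : K z z / a ≤ c ^ 2 / a := div_le_div_of_nonneg_right (hKbound z) ha0.le
      have h2 : 0 ≤ K z z / a := div_nonneg (hK0 z) ha0.le
      exact exists_substitution hn _ (sum_aff _) _ h2 (by nlinarith)
    choose g hgmem hg using hex
    refine ⟨fun hist z => g (hist.foldl (gradStep K a) 0) z, fun hist z => hgmem _ _, ?_⟩
    intro x y hy cf hcf
    set G : Matrix (Fin T) (Fin T) ℝ := Matrix.of fun s t : Fin T => K (x s) (x t) with hG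
    set st : ℕ → Z → Fin n → ℝ := fun t =>
      (List.ofFn fun s : Fin t => (x s, y s)).foldl (gradStep K a) 0 with hst
    have hst0 : st 0 = 0 := by simp [hst]
    have hstS : ∀ t, st (t + 1) = gradStep K a (st t) (x t, y t) := by
      intro t
      simp only [hst]
      rw [List.ofFn_succ', List.concat_eq_append, List.foldl_append]
      simp
    have hGpos : ∀ v : Fin T → ℝ, 0 ≤ v ⬝ᵥ (G *ᵥ v) := by
      intro v
      refine (hpsd T (fun s => x s) v).trans_eq ?_
      simp only [dotProduct, mulVec, mul_sum, hG, Matrix.of_apply]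
      exact sum_congr rfl fun s _ => sum_congr rfl fun t _ => by ring
    let ex : ℕ → Fin (n + 1) → ℝ := fun t => aff fun k : Fin n => ∑ s, cf k s * K (x s) (x t)
    -- `w` are the coefficients of the current hypothesis; the potential is `a` times its squared
    -- distance to the competitor in the reproducing kernel space.
    have main : ∀ t ≤ T, ∃ w : Fin n → Fin T → ℝ,
        (∀ z i, st t z i = ∑ s, w i s * K (x s) z) ∧
        ∑ r ∈ range t, (brier (y r) (g (st r) (x r)) - brier (y r) (ex r))
          + a * ∑ i, (w i - cf i) ⬝ᵥ (G *ᵥ (w i - cf i))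
          ≤ a * F ^ 2 + c ^ 2 / a * n * t := by
      intro t
      induction t with
      | zero =>
        intro _
        refine ⟨0, by simp [hst0], ?_⟩
        simp only [range_zero, sum_empty, Pi.zero_apply, zero_sub, mulVec_neg, neg_dotProduct,
          dotProduct_neg, neg_neg]
        have := mul_le_mul_of_nonneg_left hcf ha0.le
        simpa using this
      | succ t ih =>
        intro ht
        obtain ⟨w, hw, hpot⟩ := ih (by omega)
        set τ : Fin T := ⟨t, by omega⟩ with hτ
        set e : Fin n → ℝ := red (aff (st t (x t)) - y t) with he
        refine ⟨fun i => w i - Pi.single τ (1 / a * e i), ?_, ?_⟩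
        · intro z i
          rw [hstS]
          simp only [gradStep, hw z i, Pi.sub_apply, sub_mul, sum_sub_distrib]
          simp [Pi.single_apply, hτ, he]
        · have hquad : ∀ i, (w i - Pi.single τ (1 / a * e i) - cf i)
              ⬝ᵥ (G *ᵥ (w i - Pi.single τ (1 / a * e i) - cf i))
              = (w i - cf i) ⬝ᵥ (G *ᵥ (w i - cf i))
                - 2 / a * (e i * (st t (x t) i - ∑ s, cf i s * K (x s) (x t)))
                + (K (x t) (x t) / a / a) * e i ^ 2 := by
            intro i
            rw [sub_right_comm, gram_sub_single G (fun s t => hsymm _ _), hw]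
            simp only [Pi.sub_apply, sub_mul, sum_sub_distrib, hG, Matrix.of_apply, hτ]
            field_simp
          rw [sum_range_succ]
          simp only [hquad]
          rw [sum_add_distrib, sum_sub_distrib (f := fun i => (w i - cf i) ⬝ᵥ (G *ᵥ (w i - cf i))),
            ← mul_sum, ← mul_sum]
          have h1 := hg (st t) (x t) (y t) (hy t (by omega))
          have h2 := brier_aff_sub_le (st t (x t))
            (fun k => ∑ s, cf k s * K (x s) (x t)) (y t)
          rw [← he] at h1 h2
          have h3 : K (x t) (x t) / a * n ≤ c ^ 2 / a * n :=
            mul_le_mul_of_nonneg_right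
              (div_le_div_of_nonneg_right (hKbound _) ha0.le) hn0.le
          have h4 : a * (∑ i, (w i - cf i) ⬝ᵥ (G *ᵥ (w i - cf i))
                - 2 / a * ∑ i, e i * (st t (x t) i - ∑ s, cf i s * K (x s) (x t))
                + (K (x t) (x t) / a / a) * ∑ i, e i ^ 2)
              = a * ∑ i, (w i - cf i) ⬝ᵥ (G *ᵥ (w i - cf i))
                - 2 * ∑ i, e i * (st t (x t) i - ∑ s, cf i s * K (x s) (x t))
                + K (x t) (x t) / a * ∑ i, e i ^ 2 := by
            field_simp
          rw [h4]
          simp only [ex] at hpot ⊢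
          push_cast
          linarith
    obtain ⟨w, -, hpot⟩ := main T le_rfl
    have hnn : 0 ≤ a * ∑ i, (w i - cf i) ⬝ᵥ (G *ᵥ (w i - cf i)) :=
      mul_nonneg ha0.le (sum_nonneg fun i _ => hGpos _)
    rw [haF, haT, ← Fin.sum_univ_eq_sum_range
      (fun r => brier (y r) (g (st r) (x r)) - brier (y r) (ex r)), sum_sub_distrib] at hpot
    change ∑ t : Fin T, brier (y t) (g (st t) (x t)) ≤ ∑ t : Fin T, brier (y t) (ex t) + _
    linarith
  · -- For a large learning rate the bound exceeds the total loss of the uniform prediction.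
    push Not at hsmall
    have hu : (fun _ => 1 / ((n : ℝ) + 1) : Fin (n + 1) → ℝ) ∈ probSimplex (n + 1) := by
      refine ⟨fun _ => by positivity, ?_⟩
      simp
      field_simp
    refine ⟨fun _ _ _ => 1 / ((n : ℝ) + 1), fun _ _ => hu, ?_⟩
    intro x y hy cf _
    have hstep : ∀ t : Fin T, brier (y t) (fun _ => 1 / ((n : ℝ) + 1))
        ≤ brier (y t) (kerExpert K (n + 1) T (fun s => x s) cf (x t)) + 2 * (c ^ 2 / a) * n := by
      intro t
      have hyt := hy t t.2
      have h0 : 0 ≤ brier (y t) (kerExpert K (n + 1) T (fun s => x s) cf (x t)) :=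
        sum_nonneg fun i _ => sq_nonneg _
      have h1 : brier (y t) (fun _ => 1 / ((n : ℝ) + 1)) = ∑ i, y t i ^ 2 - 1 / (n + 1) := by
        have e : ∀ i, (1 / ((n : ℝ) + 1) - y t i) ^ 2
            = (1 / ((n : ℝ) + 1)) ^ 2 - 2 / (n + 1) * y t i + y t i ^ 2 := fun i => by ring
        simp only [brier, e, sum_add_distrib, sum_sub_distrib, ← mul_sum, hyt.2]
        simp
        field_simp
        ring
      have h2 := simplex_sq_le_one hyt
      have h3 : 1 / ((n : ℝ) + 1) ≤ 2 * (c ^ 2 / a) := by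
        rw [div_le_iff₀ (by positivity)]; exact hsmall.le
      have h4 : 1 - 1 / ((n : ℝ) + 1) = 1 / ((n : ℝ) + 1) * n := by field_simp; ring
      nlinarith
    refine (sum_le_sum fun t _ => hstep t).trans ?_
    rw [sum_add_distrib]
    simp only [sum_const, card_univ, Fintype.card_fin, nsmul_eq_mul]
    linarith
end
end

section
/- Let d ≥ 2, n ≥ 1, let x ∈ ℝ^n be a fixed signal, and let P be a Borel probability measure on ℝ^{n(d−1)}. For i = 1, …, d set r_i = −ln ∫ exp(−λ(e_i, ξ(α, x))) dP(α). Let s ∈ ℝ satisfy Σ_{i=1}^d max(s − r_i, 0) = 2, and define γ ∈ ℝ^d by γ_i = max(s − r_i, 0)/2. Then γ lies in the probability simplex Δ and for every y ∈ Δ: λ(y, γ) ≤ −ln ∫ exp(−λ(y, ξ(α, x))) dP(α). -/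
/-!
Write `L i z = brier (e_i) z`. The argument rests on the identity
`brier y z = ∑ i, y i * L i z - 1 + ∑ i, y i ^ 2`, valid for `∑ y = 1` and every vector `z`
(`brier_eq_sum_single`), and on the mixability of the Brier loss at learning rate one.

*Mixability.* For `γ` in the simplex and arbitrary `z` (not necessarily in the simplex),
`∑ i, γ i * exp (L i γ - L i z) ≤ 1` (`brier_mixable`). With `v = z - γ` this reads
`∑ i, γ i * exp (2 * v i) ≤ exp (2 * ∑ γ i * v i + ∑ v i ^ 2)`, which is Hoeffding's lemma for a
variable with values `2 * v i`, because `(max v - min v) ^ 2 / 2 ≤ ∑ v i ^ 2`.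
Integrating in `z` and applying Jensen's inequality to `exp` gives
`∑ γ i * L i γ ≤ ∑ γ i * r i`.

*Vertices.* Since `γ i * r i = γ i * (s - 2 * γ i)`, the last inequality says
`∑ γ i ^ 2 + 1 ≤ s`, and with `s - r i ≤ 2 * γ i` this yields `L i γ ≤ r i` for every `i`.

*All outcomes.* Jensen's inequality, integrated against `P`, bounds
`∫ exp (-∑ y i * (L i - r i))` by `∑ y i * exp (r i) * ∫ exp (-L i) = 1`. By the identity, the
generalized loss at `y` is therefore at least `∑ y i * r i - 1 + ∑ y i ^ 2`, which dominates
`brier y γ`.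
-/

open Finset MeasureTheory

noncomputable section

/-- Linear expert prediction: ξ_i = 1/d + α_i'x for i < d-1, and the last
component is one minus the sum of the others. -/
def expertPred (n d : ℕ) (α : Fin (d - 1) → Fin n → ℝ) (x : Fin n → ℝ) : Fin d → ℝ :=
  fun i =>
    if h : (i : ℕ) < d - 1 then (1 : ℝ) / d + ∑ j, α ⟨i, h⟩ j * x j
    else 1 - ∑ k : Fin (d - 1), ((1 : ℝ) / d + ∑ j, α k j * x j)

lemma brier_single {d : ℕ} (i : Fin d) (z : Fin d → ℝ) :
    brier (Pi.single i 1) z = ∑ j, z j ^ 2 - 2 * z i + 1 := by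
  have h : ∀ j, (z j - (Pi.single i 1 : Fin d → ℝ) j) ^ 2
      = z j ^ 2 - (if j = i then 2 * z j - 1 else 0) := by
    intro j
    by_cases hj : j = i
    · subst hj; simp; ring
    · simp [hj]
  simp only [brier, h, Finset.sum_sub_distrib, Finset.sum_ite_eq', Finset.mem_univ, if_true]
  ring

lemma brier_eq_sum_single {d : ℕ} {y : Fin d → ℝ} (hy : ∑ i, y i = 1) (z : Fin d → ℝ) :
    brier y z = ∑ i, y i * brier (Pi.single i 1) z - 1 + ∑ i, y i ^ 2 := by
  have h1 : ∑ i, y i * brier (Pi.single i 1) z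
      = ∑ j, z j ^ 2 - 2 * ∑ i, z i * y i + 1 := by
    have : ∀ i, y i * brier (Pi.single i 1) z
        = y i * (∑ j, z j ^ 2 + 1) - 2 * (z i * y i) := by
      intro i; rw [brier_single]; ring
    simp only [this, Finset.sum_sub_distrib, ← Finset.sum_mul, ← Finset.mul_sum, hy]
    ring
  have h2 : brier y z = ∑ j, z j ^ 2 - 2 * ∑ i, z i * y i + ∑ i, y i ^ 2 := by
    simp only [brier, sub_sq, Finset.sum_add_distrib, Finset.sum_sub_distrib, mul_assoc,
      ← Finset.mul_sum]
  rw [h1, h2]; ring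

lemma brier_nonneg {d : ℕ} (y z : Fin d → ℝ) : 0 ≤ brier y z :=
  Finset.sum_nonneg fun _ _ => sq_nonneg _

lemma exp_sum_mul_le {d : ℕ} {p : Fin d → ℝ} (hp : p ∈ probSimplex d) (a : Fin d → ℝ) :
    Real.exp (∑ i, p i * a i) ≤ ∑ i, p i * Real.exp (a i) := by
  simpa using convexOn_exp.map_sum_le (t := Finset.univ) (w := p) (p := a)
    (fun i _ => hp.1 i) hp.2 (fun _ _ => Set.mem_univ _)

/-- The squared spread of a vector is at most twice its squared Euclidean norm. -/
lemma sq_sub_le_two_mul_sum_sq {d : ℕ} (v : Fin d → ℝ) (i j : Fin d) :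
    (v i - v j) ^ 2 ≤ 2 * ∑ k, v k ^ 2 := by
  by_cases hij : i = j
  · subst hij
    simpa using Finset.sum_nonneg fun k _ => sq_nonneg (v k)
  · have h : ∑ k ∈ {i, j}, v k ^ 2 ≤ ∑ k, v k ^ 2 :=
      Finset.sum_le_sum_of_subset_of_nonneg (Finset.subset_univ _) fun k _ _ => sq_nonneg _
    rw [Finset.sum_pair hij] at h
    nlinarith [sq_nonneg (v i + v j)]

/-- Hoeffding's lemma on a finite set, with the range bounded by the Euclidean norm. -/
lemma hoeffding_simplex {d : ℕ} {p : Fin d → ℝ} (hp : p ∈ probSimplex d) (v : Fin d → ℝ) :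
    ∑ i, p i * Real.exp (2 * v i) ≤ Real.exp (2 * ∑ i, p i * v i + ∑ i, v i ^ 2) := by
  have hsum : ∑ i, ENNReal.ofReal (p i) = 1 := by
    rw [← ENNReal.ofReal_sum_of_nonneg fun i _ => hp.1 i, hp.2, ENNReal.ofReal_one]
  let q : PMF (Fin d) := PMF.ofFintype (fun i => ENNReal.ofReal (p i)) hsum
  have hq : ∀ f : Fin d → ℝ, ∫ i, f i ∂q.toMeasure = ∑ i, p i * f i := by
    intro f
    rw [PMF.integral_eq_sum]
    simp [q, ENNReal.toReal_ofReal (hp.1 _)]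
  have : Nonempty (Fin d) := by
    by_contra h
    rw [not_nonempty_iff] at h
    simpa using hp.2
  obtain ⟨i, hi⟩ := Finite.exists_min v
  obtain ⟨j, hj⟩ := Finite.exists_max v
  have key := (ProbabilityTheory.hasSubgaussianMGF_of_mem_Icc (μ := q.toMeasure) (X := v)
    (a := v i) (b := v j) (measurable_of_finite v).aemeasurable
    (Filter.Eventually.of_forall fun k => ⟨hi k, hj k⟩)).mgf_le 2
  rw [ProbabilityTheory.mgf, hq, hq] at key
  have hsq := sq_sub_le_two_mul_sum_sq v j i
  set m := ∑ i, p i * v i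
  have hexp : ∀ k, Real.exp (2 * v k) = Real.exp (2 * m) * Real.exp (2 * (v k - m)) := by
    intro k; rw [← Real.exp_add]; congr 1; ring
  calc ∑ k, p k * Real.exp (2 * v k)
      = Real.exp (2 * m) * ∑ k, p k * Real.exp (2 * (v k - m)) := by
        rw [Finset.mul_sum]
        exact Finset.sum_congr rfl fun k _ => by rw [hexp]; ring
    _ ≤ Real.exp (2 * m) * Real.exp (∑ k, v k ^ 2) := by
        refine mul_le_mul_of_nonneg_left (key.trans (Real.exp_le_exp.2 ?_)) (Real.exp_pos _).le
        push_cast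
        rw [div_pow, Real.norm_eq_abs, sq_abs]
        linarith
    _ = _ := by rw [← Real.exp_add]

/-- Mixability of the Brier loss at learning rate one, at a single prediction `z`; the prediction
is not required to lie in the simplex. -/
lemma brier_mixable {d : ℕ} {γ : Fin d → ℝ} (hγ : γ ∈ probSimplex d) (z : Fin d → ℝ) :
    ∑ i, γ i * Real.exp (brier (Pi.single i 1) γ - brier (Pi.single i 1) z) ≤ 1 := by
  have h := hoeffding_simplex hγ (fun i => z i - γ i)
  set c := 2 * ∑ i, γ i * (z i - γ i) + ∑ i, (z i - γ i) ^ 2 with hc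
  have hc' : c = ∑ i, z i ^ 2 - ∑ i, γ i ^ 2 := by
    rw [hc, Finset.mul_sum, ← Finset.sum_add_distrib, ← Finset.sum_sub_distrib]
    exact Finset.sum_congr rfl fun i _ => by ring
  calc ∑ i, γ i * Real.exp (brier (Pi.single i 1) γ - brier (Pi.single i 1) z)
      = Real.exp (-c) * ∑ i, γ i * Real.exp (2 * (z i - γ i)) := by
        rw [Finset.mul_sum]
        refine Finset.sum_congr rfl fun i _ => ?_
        rw [mul_left_comm, ← Real.exp_add, brier_single, brier_single, hc']
        congr 2; ring
    _ ≤ Real.exp (-c) * Real.exp c := mul_le_mul_of_nonneg_left h (Real.exp_pos _).le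
    _ = 1 := by rw [← Real.exp_add]; simp

lemma measurable_expertPred (n d : ℕ) (x : Fin n → ℝ) :
    Measurable fun α => expertPred n d α x := by
  refine measurable_pi_iff.2 fun i => ?_
  unfold expertPred
  split_ifs <;> fun_prop

lemma integrable_exp_neg_brier {Ω : Type*} [MeasurableSpace Ω] (P : Measure Ω)
    [IsProbabilityMeasure P] {d : ℕ} {f : Ω → Fin d → ℝ} (hf : Measurable f) (y : Fin d → ℝ) :
    Integrable (fun ω => Real.exp (-(brier y (f ω)))) P := by
  refine Integrable.of_bound (C := 1) ?_ (Filter.Eventually.of_forall fun ω => ?_)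
  · unfold brier
    exact Measurable.aestronglyMeasurable (by fun_prop)
  · rw [Real.norm_eq_abs, Real.abs_exp, Real.exp_le_one_iff]
    linarith [brier_nonneg y (f ω)]

/-- The substitution function of the Aggregating Algorithm (learning rate η = 1) for
the Brier game: the prediction γ_i = (s - r_i)⁺/2 lies in the simplex and its loss is
bounded by the generalized prediction for every outcome y in the simplex. -/
theorem substitution_function (n d : ℕ) (hn : 1 ≤ n) (hd : 2 ≤ d) (x : Fin n → ℝ)
    (P : Measure (Fin (d - 1) → Fin n → ℝ)) [IsProbabilityMeasure P]
    (r : Fin d → ℝ)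
    (hr : ∀ i, r i =
      -Real.log (∫ α, Real.exp (-(brier (Pi.single i 1) (expertPred n d α x))) ∂P))
    (s : ℝ) (hs : ∑ i, max (s - r i) 0 = 2)
    (γ : Fin d → ℝ) (hγ : ∀ i, γ i = max (s - r i) 0 / 2) :
    γ ∈ probSimplex d ∧
      ∀ y ∈ probSimplex d,
        brier y γ ≤ -Real.log (∫ α, Real.exp (-(brier y (expertPred n d α x))) ∂P) := by
  set f := fun α => expertPred n d α x with hf
  have hfm : Measurable f := measurable_expertPred n d x
  have hint := integrable_exp_neg_brier P hfm
  have hpos : ∀ y, 0 < ∫ α, Real.exp (-(brier y (f α))) ∂P :=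
    fun y => integral_exp_pos (hint y)
  have hr' : ∀ i, ∫ α, Real.exp (-(brier (Pi.single i 1) (f α))) ∂P = Real.exp (-r i) := by
    intro i
    rw [hr i, neg_neg, Real.exp_log (hpos _)]
  have hint' : ∀ p b : Fin d → ℝ, ∀ i ∈ Finset.univ,
      Integrable (fun α => p i * Real.exp (b i - brier (Pi.single i 1) (f α))) P := by
    intro p b i _
    simp only [sub_eq_add_neg, Real.exp_add]
    exact ((hint _).const_mul _).const_mul _
  have hmix : ∀ p b : Fin d → ℝ,
      ∫ α, ∑ i, p i * Real.exp (b i - brier (Pi.single i 1) (f α)) ∂P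
        = ∑ i, p i * Real.exp (b i - r i) := by
    intro p b
    rw [integral_finsetSum _ (hint' p b)]
    refine Finset.sum_congr rfl fun i _ => ?_
    simp only [sub_eq_add_neg, Real.exp_add, integral_const_mul, hr']
  have hΔ : γ ∈ probSimplex d := by
    refine ⟨fun i => ?_, ?_⟩
    · rw [hγ]; positivity
    · simp only [hγ, ← Finset.sum_div, hs]; norm_num
  refine ⟨hΔ, ?_⟩
  have h1 : ∑ i, γ i * (brier (Pi.single i 1) γ - r i) ≤ 0 := by
    rw [← Real.exp_le_one_iff]
    refine (exp_sum_mul_le hΔ _).trans ?_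
    rw [← hmix γ (fun i => brier (Pi.single i 1) γ)]
    calc _ ≤ ∫ _, (1 : ℝ) ∂P :=
          integral_mono (integrable_finsetSum _ (hint' γ _)) (integrable_const _)
            fun α => brier_mixable hΔ (f α)
      _ = 1 := by simp
  -- Where `γ i = 0` the relation `r i = s - 2 * γ i` may fail, but the weight `γ i` kills it.
  have h2 : ∀ i, γ i * (brier (Pi.single i 1) γ - r i) = γ i * (∑ j, γ j ^ 2 + 1 - s) := by
    intro i
    have := hγ i
    rcases max_cases (s - r i) 0 with ⟨h, _⟩ | ⟨h, _⟩
    · rw [brier_single]; rw [h] at this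
      have : r i = s - 2 * γ i := by linarith
      rw [this]; ring
    · rw [h] at this
      rw [this]; ring
  have h3 : ∑ j, γ j ^ 2 + 1 ≤ s := by
    simp only [h2, ← Finset.sum_mul, hΔ.2] at h1
    linarith
  have hvert : ∀ i, brier (Pi.single i 1) γ ≤ r i := by
    intro i
    have := le_max_left (s - r i) 0
    rw [brier_single]
    linarith [hγ i]
  intro y hy
  rw [le_neg, Real.log_le_iff_le_exp (hpos y)]
  have hpt : ∀ α, Real.exp (-(brier y (f α))) ≤ Real.exp (-(brier y γ)) *
      ∑ i, y i * Real.exp (r i - brier (Pi.single i 1) (f α)) := by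
    intro α
    refine le_trans ?_ (mul_le_mul_of_nonneg_left (exp_sum_mul_le hy _) (Real.exp_pos _).le)
    rw [← Real.exp_add, Real.exp_le_exp, brier_eq_sum_single hy.2 (f α),
      brier_eq_sum_single hy.2 γ]
    simp only [mul_sub, Finset.sum_sub_distrib]
    have : ∑ i, y i * brier (Pi.single i 1) γ ≤ ∑ i, y i * r i :=
      Finset.sum_le_sum fun i _ => mul_le_mul_of_nonneg_left (hvert i) (hy.1 i)
    linarith
  calc ∫ α, Real.exp (-(brier y (f α))) ∂P
      ≤ ∫ α, Real.exp (-(brier y γ)) *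
          ∑ i, y i * Real.exp (r i - brier (Pi.single i 1) (f α)) ∂P :=
        integral_mono (hint y) ((integrable_finsetSum _ (hint' y r)).const_mul _) hpt
    _ = Real.exp (-(brier y γ)) := by
        rw [integral_const_mul, hmix y r]
        simp [hy.2]
end
end

section
/- Let n, T ≥ 1 and d ≥ 2 be integers, a > 0 a real, x_1, …, x_T ∈ ℝ^n, and y_1, …, y_{T−1} ∈ ℝ^d. Set C₀ = Σ_{t=1}^T x_t x_t', and let A be the n(d−1) × n(d−1) block matrix A = a·I + [(j,l) block = 2C₀ if j = l, C₀ if j ≠ l, for j,l = 1, …, d−1]. For j = 1, …, d−1 set h_j = −2 Σ_{t=1}^{T−1}(y_t^j − y_t^d) x_t ∈ ℝ^n. Fix i ∈ {1, …, d−1} and define b_i ∈ ℝ^{n(d−1)} with block j equal to h_j + x_T for j ≠ i and block i equal to h_i, and z_i ∈ ℝ^{n(d−1)} with block j equal to −x_T for j ≠ i and block i equal to −2x_T. Further set K̃ = (x_s'x_t)_{s,t=1}^T, k̃ = (x_t'x_T)_{t=1}^T ∈ ℝ^T, Ỹ_j = −2(y_1^j − y_1^d, …, y_{T−1}^j − y_{T−1}^d,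 −1/2) ∈ ℝ^T, Ȳ_i = −2(y_1^i − y_1^d, …, y_{T−1}^i − y_{T−1}^d, 0) ∈ ℝ^T, and let 𝒜 = a·I + [(j,l) block = 2K̃ if j = l, K̃ if j ≠ l] be the T(d−1) × T(d−1) block matrix. Then A and 𝒜 are invertible and −b_i' A^{−1} z_i = u' 𝒜^{−1} v, where u ∈ ℝ^{T(d−1)} stacks the blocks Ỹ_1, …, Ỹ_{i−1}, Ȳ_i, Ỹ_{i+1}, …, Ỹ_{d−1} and v ∈ ℝ^{T(d−1)} has block j equal to k̃ for j ≠ i and block i equal to 2k̃. -/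
/-!
Let `X` be the `T × n` matrix with rows `x_t` and `M = 1 + 𝟙𝟙ᵀ` of size `d - 1`. Then
`A = a + M ⊗ XᵀX` and `𝒜 = a + M ⊗ XXᵀ`; both are positive definite, since `a > 0` and a
Kronecker product of positive semidefinite matrices is positive semidefinite. With `S = 1 ⊗ X`
both `𝒜 S` and `S A` equal `a S + M ⊗ XXᵀX`, so `S` intertwines the inverses: `S A⁻¹ = 𝒜⁻¹ S`.
Since `b = Sᵀ u` and `v = -S z`, this gives `-b'A⁻¹z = -u'S A⁻¹z = -u'𝒜⁻¹S z = u'𝒜⁻¹v`.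
-/

open Finset Matrix

noncomputable section

open scoped Kronecker

/-- The matrix `1 + 𝟙𝟙ᵀ`, which has `2` on the diagonal and `1` elsewhere: the common block
pattern of the primal and dual matrices. -/
def blockPattern (m : ℕ) : Matrix (Fin m) (Fin m) ℝ :=
  Matrix.of fun j l => if j = l then 2 else 1

lemma blockPattern_posSemidef (m : ℕ) : (blockPattern m).PosSemidef := by
  have e : blockPattern m = 1 + vecMulVec (fun _ => (1 : ℝ)) (star fun _ => (1 : ℝ)) := by
    ext j l
    by_cases hjl : j = l
    · simp [blockPattern, vecMulVec_apply, hjl]; norm_num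
    · simp [blockPattern, vecMulVec_apply, hjl]
  rw [e]
  exact PosSemidef.one.add (posSemidef_vecMulVec_self_star _)

lemma isUnit_smul_one_add {ι : Type*} [Fintype ι] [DecidableEq ι] {a : ℝ} (ha : 0 < a)
    {P : Matrix ι ι ℝ} (hP : P.PosSemidef) : IsUnit (a • (1 : Matrix ι ι ℝ) + P) :=
  ((PosDef.one.smul ha).add_posSemidef hP).isUnit

/-- Push-through identity for inverses: an intertwiner of two invertible matrices also intertwines
their inverses. -/
lemma mul_inv_eq_inv_mul_of_intertwine {ι κ : Type*} [Fintype ι] [DecidableEq ι] [Fintype κ]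
    [DecidableEq κ] {A : Matrix ι ι ℝ} {B : Matrix κ κ ℝ} {S : Matrix κ ι ℝ}
    (hA : IsUnit A) (hB : IsUnit B) (hS : B * S = S * A) : S * A⁻¹ = B⁻¹ * S := by
  have hA' := (Matrix.isUnit_iff_isUnit_det A).1 hA
  have hB' := (Matrix.isUnit_iff_isUnit_det B).1 hB
  calc S * A⁻¹ = B⁻¹ * (B * S) * A⁻¹ := by rw [Matrix.nonsing_inv_mul_cancel_left _ _ hB']
    _ = B⁻¹ * S := by
      rw [hS, ← Matrix.mul_assoc, Matrix.mul_nonsing_inv_cancel_right _ _ hA']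

/-- A sum over `Fin T` splits into its first `T - 1` terms and its last one. -/
lemma sum_fin_eq_sum_pred_add_last {T : ℕ} (hT : 1 ≤ T) (f : Fin T → ℝ) :
    ∑ t, f t = ∑ t : Fin (T - 1), f ⟨(t : ℕ), by omega⟩ + f ⟨T - 1, by omega⟩ := by
  obtain ⟨T, rfl⟩ : ∃ k, T = k + 1 := ⟨T - 1, by omega⟩
  exact Fin.sum_univ_castSucc f

/-- Dual (kernel) form of the quantities r_i = -b_i'A⁻¹z_i computed by the mAAR
algorithm for the Brier game: both the primal matrix A (of size n(d-1)) and the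
dual matrix 𝒜 (of size T(d-1)) are invertible and -b_i'A⁻¹z_i = u'𝒜⁻¹v. -/
theorem mAAR_dual_form (n T d : ℕ) (hn : 1 ≤ n) (hT : 1 ≤ T) (hd : 2 ≤ d)
    (a : ℝ) (ha : 0 < a)
    (x : Fin T → Fin n → ℝ) (y : Fin (T - 1) → Fin d → ℝ) (i : Fin (d - 1))
    -- C₀ = Σ_{t=1}^T x_t x_t'
    (C₀ : Matrix (Fin n) (Fin n) ℝ)
    (hC₀ : C₀ = ∑ t : Fin T, Matrix.vecMulVec (x t) (x t))
    -- A = aI + [2C₀ on diagonal blocks, C₀ off-diagonal]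
    (A : Matrix (Fin (d - 1) × Fin n) (Fin (d - 1) × Fin n) ℝ)
    (hA : A = a • (1 : Matrix (Fin (d - 1) × Fin n) (Fin (d - 1) × Fin n) ℝ)
      + Matrix.of fun p q => (if p.1 = q.1 then (2 : ℝ) else 1) * C₀ p.2 q.2)
    -- h_j = -2 Σ_{t=1}^{T-1} (y_t^j - y_t^d) x_t
    (h : Fin (d - 1) → Fin n → ℝ)
    (hh : ∀ j k, h j k = -2 * ∑ t : Fin (T - 1),
      (y t ⟨(j : ℕ), by omega⟩ - y t ⟨d - 1, by omega⟩) * x ⟨(t : ℕ), by omega⟩ k)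
    -- b_i: block j is h_j + x_T for j ≠ i, block i is h_i
    (b : Fin (d - 1) × Fin n → ℝ)
    (hb : ∀ p, b p =
      if p.1 = i then h p.1 p.2 else h p.1 p.2 + x ⟨T - 1, by omega⟩ p.2)
    -- z_i: block j is -x_T for j ≠ i, block i is -2x_T
    (z : Fin (d - 1) × Fin n → ℝ)
    (hz : ∀ p, z p =
      if p.1 = i then -2 * x ⟨T - 1, by omega⟩ p.2 else -(x ⟨T - 1, by omega⟩ p.2))
    -- K̃ = Gram matrix of scalar products, k̃ = (x_t'x_T)_t
    (G : Matrix (Fin T) (Fin T) ℝ) (hG : G = Matrix.of fun s t => ∑ k, x s k * x t k)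
    (kv : Fin T → ℝ) (hkv : ∀ t, kv t = ∑ k, x t k * x ⟨T - 1, by omega⟩ k)
    -- Ỹ_j = -2(y_1^j - y_1^d, …, y_{T-1}^j - y_{T-1}^d, -1/2)
    (Yt : Fin (d - 1) → Fin T → ℝ)
    (hYt : ∀ j t, Yt j t =
      if h' : (t : ℕ) < T - 1 then
        -2 * (y ⟨(t : ℕ), h'⟩ ⟨(j : ℕ), by omega⟩ - y ⟨(t : ℕ), h'⟩ ⟨d - 1, by omega⟩)
      else 1)
    -- Ȳ_i = -2(y_1^i - y_1^d, …, y_{T-1}^i - y_{T-1}^d, 0)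
    (Yb : Fin T → ℝ)
    (hYb : ∀ t, Yb t =
      if h' : (t : ℕ) < T - 1 then
        -2 * (y ⟨(t : ℕ), h'⟩ ⟨(i : ℕ), by omega⟩ - y ⟨(t : ℕ), h'⟩ ⟨d - 1, by omega⟩)
      else 0)
    -- 𝒜 = aI + [2K̃ on diagonal blocks, K̃ off-diagonal]
    (𝒜 : Matrix (Fin (d - 1) × Fin T) (Fin (d - 1) × Fin T) ℝ)
    (h𝒜 : 𝒜 = a • (1 : Matrix (Fin (d - 1) × Fin T) (Fin (d - 1) × Fin T) ℝ)
      + Matrix.of fun p q => (if p.1 = q.1 then (2 : ℝ) else 1) * G p.2 q.2)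
    -- u stacks Ỹ_1, …, Ȳ_i, …, Ỹ_{d-1}; v has blocks k̃ except 2k̃ in block i
    (u : Fin (d - 1) × Fin T → ℝ)
    (hu : ∀ p, u p = if p.1 = i then Yb p.2 else Yt p.1 p.2)
    (v : Fin (d - 1) × Fin T → ℝ)
    (hv : ∀ p, v p = if p.1 = i then 2 * kv p.2 else kv p.2) :
    IsUnit A ∧ IsUnit 𝒜 ∧ -(b ⬝ᵥ A⁻¹ *ᵥ z) = u ⬝ᵥ 𝒜⁻¹ *ᵥ v := by
  set X : Matrix (Fin T) (Fin n) ℝ := Matrix.of x with hX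
  set M := blockPattern (d - 1) with hM
  set S : Matrix (Fin (d - 1) × Fin T) (Fin (d - 1) × Fin n) ℝ :=
    (1 : Matrix (Fin (d - 1)) (Fin (d - 1)) ℝ) ⊗ₖ X with hS
  have eA : A = a • 1 + M ⊗ₖ (Xᵀ * X) := by
    rw [hA, hC₀]
    ext p q
    simp [hM, hX, blockPattern, Matrix.mul_apply, Matrix.sum_apply, vecMulVec_apply]
  have eB : 𝒜 = a • 1 + M ⊗ₖ (X * Xᵀ) := by
    rw [h𝒜, hG]
    ext p q
    simp [hM, hX, blockPattern, Matrix.mul_apply]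
  have uA : IsUnit A := by
    rw [eA]
    refine isUnit_smul_one_add ha ((blockPattern_posSemidef _).kronecker ?_)
    simpa using posSemidef_conjTranspose_mul_self X
  have uB : IsUnit 𝒜 := by
    rw [eB]
    refine isUnit_smul_one_add ha ((blockPattern_posSemidef _).kronecker ?_)
    simpa using posSemidef_self_mul_conjTranspose X
  have hint : 𝒜 * S = S * A := by
    rw [eA, eB, hS, Matrix.add_mul, Matrix.mul_add, ← Matrix.mul_kronecker_mul, ← Matrix.mul_kronecker_mul]
    simp [Matrix.mul_assoc]
  have hbS : b = u ᵥ* S := by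
    ext ⟨j, k⟩
    have e : (u ᵥ* S) (j, k) = ∑ t, u (j, t) * x t k := by
      simp [hS, hX, Matrix.vecMul, dotProduct, Fintype.sum_prod_type, Matrix.one_apply]
    rw [e, sum_fin_eq_sum_pred_add_last hT, hb]
    by_cases hj : j = i
    · subst hj
      simp [hu, hYb, hh, Finset.mul_sum, mul_assoc]
    · simp [hj, hu, hYt, hh, Finset.mul_sum, mul_assoc]
  have hvS : v = -(S *ᵥ z) := by
    ext ⟨j, t⟩
    have e : (S *ᵥ z) (j, t) = ∑ k, x t k * z (j, k) := by
      simp [hS, hX, Matrix.mulVec, dotProduct, Fintype.sum_prod_type, Matrix.one_apply]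
    rw [Pi.neg_apply, e, hv]
    by_cases hj : j = i
    · simp only [hj, hz, hkv, if_true, Finset.mul_sum, ← Finset.sum_neg_distrib]
      exact Finset.sum_congr rfl fun k _ => by ring
    · simp [hj, hz, hkv]
  refine ⟨uA, uB, ?_⟩
  rw [hbS, hvS, ← Matrix.dotProduct_mulVec, Matrix.mulVec_mulVec,
    mul_inv_eq_inv_mul_of_intertwine uA uB hint, Matrix.mulVec_neg, dotProduct_neg,
    Matrix.mulVec_mulVec]
end
end

section
/- Let A < B be reals and let η ∈ (0, 2/(B−A)²]. For every Borel probability measure P on ℝ there exists γ ∈ [A, B] such that for every y ∈ [A, B]: (y − γ)² ≤ −(1/η) ln ∫_ℝ e^{−η(y−ξ)²} dP(ξ). -/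
/-!
Writing `I y = ∫ exp (-η (y - ξ)²) dP`, the claim is `I y ≤ exp (-η (y - γ)²)`. The exponent
`η ((y - γ)² - (y - ξ)²)` is affine in `y`, so by convexity of `exp` it suffices to treat the
two endpoints `y = A` and `y = B` (`endpoint_reduction`).

For the endpoints put `I A = exp (-η a²)` and `I B = exp (-η b²)` with `a, b ≥ 0`. A suitable `γ`
exists as soon as `B - A ≤ a + b`. If instead `a + b < B - A`, choose `γ` with `γ - A > a` and
`B - γ > b`. The supporting line at `γ` of the curve
`ξ ↦ (exp (-η (A - ξ)²), exp (-η (B - ξ)²))` gives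
`(B - γ) exp (η ((A - γ)² - (A - ξ)²)) + (γ - A) exp (η ((B - γ)² - (B - ξ)²)) ≤ B - A`
for all real `ξ` (`supporting_line`). This is Hoeffding's lemma for a centred two-point
distribution, and it is where `η ≤ 2 / (B - A)²` enters. Integrating over `P` contradicts the
choice of `γ`.
-/

open MeasureTheory

noncomputable section

/-- Hoeffding's lemma for the centred distribution on `{-s, r}` with weights proportional to
`r` and `s`. -/
lemma two_point_hoeffding (s r t : ℝ) (hs : 0 < s) (hr : 0 < r) :
    r * Real.exp (t * -s) + s * Real.exp (t * r)
      ≤ (s + r) * Real.exp ((s + r) ^ 2 * t ^ 2 / 8) := by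
  have hL : 0 < s + r := by linarith
  set μ : Measure ℝ := ENNReal.ofReal (r / (s + r)) • Measure.dirac (-s)
    + ENNReal.ofReal (s / (s + r)) • Measure.dirac r with hμ
  have hint : ∀ f : ℝ → ℝ, ∫ x, f x ∂μ = r / (s + r) * f (-s) + s / (s + r) * f r := by
    intro f
    have h1 : ∀ (c x : ℝ), Integrable f (ENNReal.ofReal c • Measure.dirac x) := fun c x =>
      (integrable_dirac (by simp)).smul_measure ENNReal.ofReal_ne_top
    rw [hμ, integral_add_measure (h1 _ _) (h1 _ _), integral_smul_measure, integral_smul_measure,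
      integral_dirac, integral_dirac, ENNReal.toReal_ofReal (by positivity),
      ENNReal.toReal_ofReal (by positivity)]
    simp
  have : IsProbabilityMeasure μ := by
    constructor
    simp only [hμ, Measure.coe_add, Measure.coe_smul, Pi.add_apply, Pi.smul_apply,
      measure_univ, smul_eq_mul, mul_one]
    rw [← ENNReal.ofReal_add (by positivity) (by positivity), ← add_div, add_comm r s,
      div_self hL.ne', ENNReal.ofReal_one]
  have hmem : ∀ᵐ x ∂μ, id x ∈ Set.Icc (-s) r := by
    rw [hμ, ae_add_measure_iff]
    constructor
    · refine Measure.ae_smul_measure ?_ _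
      rw [ae_dirac_iff (by exact measurableSet_Icc)]
      constructor <;> simp <;> linarith
    · refine Measure.ae_smul_measure ?_ _
      rw [ae_dirac_iff (by exact measurableSet_Icc)]
      constructor <;> simp <;> linarith
  have hzero : ∫ x, id x ∂μ = 0 := by
    rw [hint]; simp only [id]; field_simp; ring
  have h := (ProbabilityTheory.hasSubgaussianMGF_of_mem_Icc_of_integral_eq_zero
    aemeasurable_id hmem hzero).mgf_le t
  rw [ProbabilityTheory.mgf, hint] at h
  have h2 := mul_le_mul_of_nonneg_left h hL.le
  simp only [id] at h2
  have e1 : (s + r) * (r / (s + r) * Real.exp (t * -s) + s / (s + r) * Real.exp (t * r))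
      = r * Real.exp (t * -s) + s * Real.exp (t * r) := by
    field_simp
  rw [e1] at h2
  refine h2.trans_eq ?_
  congr 2
  push_cast
  rw [Real.norm_eq_abs, div_pow, sq_abs]
  ring

/-- The curve `ξ ↦ (exp (-η (A - ξ)²), exp (-η (B - ξ)²))` lies on one side of its tangent line
at `γ`. -/
lemma supporting_line (A B η γ ξ : ℝ) (hη : 0 < η) (hη2 : η * (B - A) ^ 2 ≤ 2)
    (hA : A < γ) (hB : γ < B) :
    (B - γ) * Real.exp (η * ((A - γ) ^ 2 - (A - ξ) ^ 2))
      + (γ - A) * Real.exp (η * ((B - γ) ^ 2 - (B - ξ) ^ 2)) ≤ B - A := by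
  -- With `d = ξ - γ` both exponents contain the common summand `-η d²`.
  have h := two_point_hoeffding (γ - A) (B - γ) (2 * η * (ξ - γ)) (by linarith) (by linarith)
  have e1 : η * ((A - γ) ^ 2 - (A - ξ) ^ 2)
      = 2 * η * (ξ - γ) * -(γ - A) + -(η * (ξ - γ) ^ 2) := by ring
  have e2 : η * ((B - γ) ^ 2 - (B - ξ) ^ 2)
      = 2 * η * (ξ - γ) * (B - γ) + -(η * (ξ - γ) ^ 2) := by ring
  rw [e1, e2, Real.exp_add, Real.exp_add]
  have e3 : γ - A + (B - γ) = B - A := by ring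
  rw [e3] at h
  have h3 : Real.exp ((B - A) ^ 2 * (2 * η * (ξ - γ)) ^ 2 / 8) ≤ Real.exp (η * (ξ - γ) ^ 2) := by
    apply Real.exp_le_exp.mpr
    have := mul_le_mul_of_nonneg_right hη2 (by positivity : 0 ≤ η * (ξ - γ) ^ 2 / 2)
    nlinarith
  have h4 := h.trans (mul_le_mul_of_nonneg_left h3 (by linarith : 0 ≤ B - A))
  have h5 := mul_le_mul_of_nonneg_right h4 (Real.exp_pos (-(η * (ξ - γ) ^ 2))).le
  rw [mul_assoc (B - A), ← Real.exp_add, add_neg_cancel, Real.exp_zero] at h5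
  linarith

lemma integrable_exp_loss (P : Measure ℝ) [IsProbabilityMeasure P] (η y : ℝ) (hη : 0 < η) :
    Integrable (fun ξ => Real.exp (-η * (y - ξ) ^ 2)) P := by
  refine Integrable.of_bound (C := 1) (by fun_prop) (Filter.Eventually.of_forall fun ξ => ?_)
  rw [Real.norm_eq_abs, abs_of_pos (Real.exp_pos _), Real.exp_le_one_iff]
  nlinarith [mul_nonneg hη.le (sq_nonneg (y - ξ))]

lemma exp_loss_shift (η y γ ξ : ℝ) : Real.exp (η * ((y - γ) ^ 2 - (y - ξ) ^ 2))
    = Real.exp (η * (y - γ) ^ 2) * Real.exp (-η * (y - ξ) ^ 2) := by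
  rw [← Real.exp_add]; congr 1; ring

lemma integrable_exp_shift (P : Measure ℝ) [IsProbabilityMeasure P] (η y γ : ℝ) (hη : 0 < η) :
    Integrable (fun ξ => Real.exp (η * ((y - γ) ^ 2 - (y - ξ) ^ 2))) P := by
  simp only [exp_loss_shift]
  exact (integrable_exp_loss P η y hη).const_mul _

lemma integral_exp_shift (P : Measure ℝ) (η y γ : ℝ) :
    ∫ ξ, Real.exp (η * ((y - γ) ^ 2 - (y - ξ) ^ 2)) ∂P
      = Real.exp (η * (y - γ) ^ 2) * ∫ ξ, Real.exp (-η * (y - ξ) ^ 2) ∂P := by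
  simp only [exp_loss_shift]
  exact integral_const_mul _ _

/-- The relative exponential loss against `γ` is a convex function of the outcome, so a bound at
both endpoints holds on the whole interval. -/
lemma endpoint_reduction (A B η γ y : ℝ) (hAB : A < B) (hη : 0 < η) (P : Measure ℝ)
    [IsProbabilityMeasure P] (hy : y ∈ Set.Icc A B)
    (hA : ∫ ξ, Real.exp (η * ((A - γ) ^ 2 - (A - ξ) ^ 2)) ∂P ≤ 1)
    (hB : ∫ ξ, Real.exp (η * ((B - γ) ^ 2 - (B - ξ) ^ 2)) ∂P ≤ 1) :
    ∫ ξ, Real.exp (η * ((y - γ) ^ 2 - (y - ξ) ^ 2)) ∂P ≤ 1 := by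
  rw [← segment_eq_Icc hAB.le] at hy
  obtain ⟨p, q, hp, hq, hpq, rfl⟩ := hy
  simp only [smul_eq_mul]
  have hle : ∀ ξ, Real.exp (η * ((p * A + q * B - γ) ^ 2 - (p * A + q * B - ξ) ^ 2))
      ≤ p * Real.exp (η * ((A - γ) ^ 2 - (A - ξ) ^ 2))
        + q * Real.exp (η * ((B - γ) ^ 2 - (B - ξ) ^ 2)) := by
    intro ξ
    have h := convexOn_exp.2 (Set.mem_univ (η * ((A - γ) ^ 2 - (A - ξ) ^ 2)))
      (Set.mem_univ (η * ((B - γ) ^ 2 - (B - ξ) ^ 2))) hp hq hpq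
    simp only [smul_eq_mul] at h
    refine le_of_eq_of_le ?_ h
    congr 1
    obtain rfl : p = 1 - q := by linarith
    ring
  have iA := (integrable_exp_shift P η A γ hη).const_mul p
  have iB := (integrable_exp_shift P η B γ hη).const_mul q
  have h := integral_mono (integrable_exp_shift P η (p * A + q * B) γ hη) (iA.add iB) hle
  simp only [Pi.add_apply] at h
  rw [integral_add iA iB, integral_const_mul, integral_const_mul] at h
  nlinarith

/-- Every integral of the exponential loss has the form `exp (-η a²)`. -/
lemma exists_radius (P : Measure ℝ) [IsProbabilityMeasure P] (η y : ℝ) (hη : 0 < η) :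
    ∃ a, 0 ≤ a ∧ ∫ ξ, Real.exp (-η * (y - ξ) ^ 2) ∂P = Real.exp (-(η * a ^ 2)) := by
  have hpos := integral_exp_pos (integrable_exp_loss P η y hη)
  have hle : ∫ ξ, Real.exp (-η * (y - ξ) ^ 2) ∂P ≤ 1 := by
    have := integral_mono (integrable_exp_loss P η y hη) (integrable_const (1 : ℝ))
      (fun ξ => by
        simp only [Real.exp_le_one_iff]
        nlinarith [mul_nonneg hη.le (sq_nonneg (y - ξ))])
    simpa using this
  have hlog := Real.log_nonpos hpos.le hle
  refine ⟨√(-Real.log (∫ ξ, Real.exp (-η * (y - ξ) ^ 2) ∂P) / η), Real.sqrt_nonneg _, ?_⟩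
  rw [Real.sq_sqrt (div_nonneg (by linarith) hη.le), mul_div_cancel₀ _ hη.ne', neg_neg,
    Real.exp_log hpos]

lemma exists_endpoint_prediction (A B η : ℝ) (hAB : A < B) (hη : 0 < η)
    (hη2 : η * (B - A) ^ 2 ≤ 2) (P : Measure ℝ) [IsProbabilityMeasure P] :
    ∃ γ ∈ Set.Icc A B, ∫ ξ, Real.exp (η * ((A - γ) ^ 2 - (A - ξ) ^ 2)) ∂P ≤ 1 ∧
      ∫ ξ, Real.exp (η * ((B - γ) ^ 2 - (B - ξ) ^ 2)) ∂P ≤ 1 := by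
  obtain ⟨a, ha, hIa⟩ := exists_radius P η A hη
  obtain ⟨b, hb, hIb⟩ := exists_radius P η B hη
  have key : B - A ≤ a + b := by
    by_contra! hlt
    -- Any point strictly between `A + a` and `B - b` would violate the supporting line bound.
    obtain ⟨γ, h1, h2⟩ : ∃ γ, A + a < γ ∧ γ < B - b := exists_between (by linarith)
    have iA := (integrable_exp_shift P η A γ hη).const_mul (B - γ)
    have iB := (integrable_exp_shift P η B γ hη).const_mul (γ - A)
    have h := integral_mono (iA.add iB) (integrable_const (B - A)) (fun ξ =>
      supporting_line A B η γ ξ hη hη2 (by linarith) (by linarith))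
    simp only [Pi.add_apply] at h
    rw [integral_add iA iB, integral_const_mul, integral_const_mul, integral_exp_shift,
      integral_exp_shift, hIa, hIb, ← Real.exp_add, ← Real.exp_add] at h
    simp only [integral_const, probReal_univ, one_smul] at h
    have hA : 1 < Real.exp (η * (A - γ) ^ 2 + -(η * a ^ 2)) := by
      apply Real.one_lt_exp_iff.mpr
      have : 0 < η * ((A - γ) ^ 2 - a ^ 2) := mul_pos hη (by nlinarith)
      linarith
    have hB : 1 < Real.exp (η * (B - γ) ^ 2 + -(η * b ^ 2)) := by
      apply Real.one_lt_exp_iff.mpr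
      have : 0 < η * ((B - γ) ^ 2 - b ^ 2) := mul_pos hη (by nlinarith)
      linarith
    have := mul_lt_mul_of_pos_left hA (by linarith : 0 < B - γ)
    have := mul_lt_mul_of_pos_left hB (by linarith : 0 < γ - A)
    linarith
  have close : ∀ u v : ℝ, u ^ 2 ≤ v ^ 2 →
      Real.exp (η * u ^ 2) * Real.exp (-(η * v ^ 2)) ≤ 1 := by
    intro u v huv
    rw [← Real.exp_add, Real.exp_le_one_iff]
    have := mul_le_mul_of_nonneg_left huv hη.le
    linarith
  refine ⟨min (A + a) B, ⟨le_min (by linarith) hAB.le, min_le_right _ _⟩, ?_, ?_⟩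
  · rw [integral_exp_shift, hIa]
    apply close
    rcases min_cases (A + a) B with ⟨h, h'⟩ | ⟨h, h'⟩ <;> rw [h] <;> nlinarith
  · rw [integral_exp_shift, hIb]
    apply close
    rcases min_cases (A + a) B with ⟨h, h'⟩ | ⟨h, h'⟩ <;> rw [h] <;> nlinarith

/-- Mixability of the one-dimensional square-loss game with outcomes in [A,B] at
learning rate η ≤ 2/(B-A)²: for every distribution over experts' real-valued
predictions there is γ ∈ [A,B] whose loss is bounded by the generalized prediction. -/
theorem square_loss_mixable (A B : ℝ) (hAB : A < B)
    (η : ℝ) (hη : η ∈ Set.Ioc (0 : ℝ) (2 / (B - A) ^ 2))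
    (P : Measure ℝ) [IsProbabilityMeasure P] :
    ∃ γ ∈ Set.Icc A B, ∀ y ∈ Set.Icc A B,
      (y - γ) ^ 2
        ≤ -(1 / η) * Real.log (∫ ξ, Real.exp (-η * (y - ξ) ^ 2) ∂P) := by
  obtain ⟨hη0, hη1⟩ := hη
  have hη2 : η * (B - A) ^ 2 ≤ 2 :=
    (le_div_iff₀ (pow_pos (by linarith) 2)).mp hη1
  obtain ⟨γ, hγ, hA, hB⟩ := exists_endpoint_prediction A B η hAB hη0 hη2 P
  refine ⟨γ, hγ, fun y hy => ?_⟩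
  have h := endpoint_reduction A B η γ y hAB hη0 P hy hA hB
  rw [integral_exp_shift] at h
  have hpos := integral_exp_pos (integrable_exp_loss P η y hη0)
  have hl := Real.log_nonpos (mul_pos (Real.exp_pos _) hpos).le h
  rw [Real.log_mul (Real.exp_pos _).ne' hpos.ne', Real.log_exp] at hl
  rw [neg_mul, one_div, ← mul_neg, ← div_eq_inv_mul, le_div_iff₀ hη0]
  linarith
end
end
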